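/- arXiv:2208.03277 — 2 statements merged into one kernel-verified Lean document; each statement's English description precedes it below -/
import Mathlib

section
/- Let R be a (not necessarily commutative) ring and let t, d ∈ R satisfy d*t − t*d = 1. Set s = −d*t. Then for every integer m ≥ 1 one has d^m * t^m = (−1)^m • P_m(s), where P_m(x) = x(x−1)⋯(x−m+1) ∈ ℤ[x] is the descending factorial (descPochhammer) polynomial and P_m(s) denotes its evaluation at s via the canonical ring map ℤ[x] → R sending x to s (integers being central in R). -/
/-!
The relation `d * t = t * d + 1` says that `t` shifts `a = d * t` by one: `t * (a + 1) = a * t`.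
Moving the inner factor `a` of `d ^ (m + 1) * t ^ (m + 1) = d ^ m * a * t ^ m` past `t ^ m` thus
gives `d ^ m * t ^ m * (a + m)`, so `d ^ m * t ^ m` is the rising factorial `a * (a + 1) * ⋯`,
which is up to sign the falling factorial of `-a`.
-/

open Polynomial

theorem semiconjBy_pow_add_natCast {R : Type*} [Semiring R] {t a : R}
    (h : SemiconjBy t (a + 1) a) (m : ℕ) : SemiconjBy (t ^ m) (a + m) a := by
  induction m with
  | zero => simp
  | succ m ih =>
    have shift_succ : SemiconjBy t (a + (m + 1 : ℕ)) (a + m) := by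
      simpa only [Nat.cast_succ, add_assoc, add_comm (1 : R)] using
        h.add_right (Nat.cast_commute m t).symm
    simpa only [pow_succ] using ih.mul_left shift_succ

theorem pow_mul_pow_eq_aeval_ascPochhammer {R : Type*} [Semiring R] {t d : R}
    (h : d * t = t * d + 1) (m : ℕ) :
    d ^ m * t ^ m = aeval (d * t) (ascPochhammer ℕ m) := by
  have shift : SemiconjBy t (d * t + 1) (d * t) := by
    rw [SemiconjBy, mul_add_one, ← mul_assoc, ← add_one_mul, ← h]
  induction m with
  | zero => simp
  | succ m ih =>
    calc d ^ (m + 1) * t ^ (m + 1)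
        = d ^ m * (d * t * t ^ m) := by simp only [pow_succ d, pow_succ' t, mul_assoc]
      _ = d ^ m * t ^ m * (d * t + m) := by
        rw [← (semiconjBy_pow_add_natCast shift m).eq, mul_assoc]
      _ = aeval (d * t) (ascPochhammer ℕ (m + 1)) := by
        rw [ih, ascPochhammer_succ_right, map_mul, map_add, aeval_X, map_natCast]

theorem aeval_neg_ascPochhammer {R : Type*} [Ring R] (x : R) (m : ℕ) :
    aeval (-x) (ascPochhammer ℕ m) = (-1 : ℤ) ^ m • aeval x (descPochhammer ℤ m) := by
  simpa [aeval_eq_smeval, Int.negOnePow, Units.smul_def] using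
    ascPochhammer_smeval_neg_eq_descPochhammer x m

/-- Lemma A.2: if `d*t - t*d = 1` and `s = -(d*t)`, then for every `m ≥ 1`,
`d^m * t^m = (-1)^m • (s*(s-1)*⋯*(s-m+1))`, the last factor being the evaluation at `s`
of the descending factorial polynomial `descPochhammer ℤ m`. -/
theorem pow_mul_pow_eq_descPochhammer {R : Type*} [Ring R] (t d : R)
    (h : d * t - t * d = 1) :
    ∀ m : ℕ, 1 ≤ m →
      d ^ m * t ^ m
        = (-1 : ℤ) ^ m • (Polynomial.aeval (-(d * t)) (descPochhammer ℤ m)) := by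
  intro m _
  rw [pow_mul_pow_eq_aeval_ascPochhammer (sub_eq_iff_eq_add'.mp h), ← aeval_neg_ascPochhammer,
    neg_neg]
end

section
/- With the notation of the context, for every m ∈ ℤ and every u ∈ B̃_g^{(m)} one has φ(s u) = (s − m)φ(u), i.e., φ(s u) = s(φ(u)) − m • φ(u), where s denotes the operator −∂_z∘z on B̃_g and the operator −Σᵢ ∂_{t_i}∘t_i on B_f. -/
noncomputable section

open Finsupp

/-- `B_f` modeled as the free `R`-module with basis `{e_β : β ∈ ℕ^d}`. -/
abbrev Bf (R : Type*) [CommRing R] (d : ℕ) : Type _ := (Fin d → ℕ) →₀ R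

/-- `B̃_g` modeled as the free `R`-module with basis `{u_{α,j} : α ∈ ℕ^d, j ∈ ℤ}`. -/
abbrev Btil (R : Type*) [CommRing R] (d : ℕ) : Type _ := ((Fin d → ℕ) × ℤ) →₀ R

variable (R : Type*) [CommRing R] [Algebra ℂ R] (d : ℕ) (f : Fin d → R)

/-- The operator `∂_z^k` : `h u_{α,j} ↦ h u_{α,j+k}`. -/
def dz (k : ℤ) : Btil R d →ₗ[R] Btil R d :=
  Finsupp.lift (Btil R d) R ((Fin d → ℕ) × ℤ) fun p => Finsupp.single (p.1, p.2 + k) 1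

/-- The operator `z` : `h u_{α,j} ↦ Σᵢ fᵢ h u_{α+eᵢ,j} - j h u_{α,j-1}`. -/
def zOp : Btil R d →ₗ[R] Btil R d :=
  Finsupp.lift (Btil R d) R ((Fin d → ℕ) × ℤ) fun p =>
    (∑ i : Fin d, f i • Finsupp.single (p.1 + Pi.single i 1, p.2) (1 : R))
      - p.2 • Finsupp.single (p.1, p.2 - 1) (1 : R)

/-- The operator `s = -∂_z ∘ z` on `B̃_g`. -/
def sTil : Btil R d →ₗ[R] Btil R d := -((dz R d 1).comp (zOp R d f))

/-- The operator `∂_{t_i}` : `h e_β ↦ h e_{β+eᵢ}`. -/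
def dtOp (i : Fin d) : Bf R d →ₗ[R] Bf R d :=
  Finsupp.lift (Bf R d) R (Fin d → ℕ) fun β => Finsupp.single (β + Pi.single i 1) 1

/-- The operator `t_i` : `h e_β ↦ fᵢ h e_β - βᵢ h e_{β-eᵢ}`. -/
def tOp (i : Fin d) : Bf R d →ₗ[R] Bf R d :=
  Finsupp.lift (Bf R d) R (Fin d → ℕ) fun β =>
    f i • Finsupp.single β (1 : R) - (β i) • Finsupp.single (β - Pi.single i 1) (1 : R)

/-- The operator `s = -Σᵢ ∂_{t_i} ∘ t_i` on `B_f`. -/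
def sF : Bf R d →ₗ[R] Bf R d := -∑ i : Fin d, (dtOp R d i).comp (tOp R d f i)

/-- The `R`-linear map `φ : B̃_g → B_f`, `φ(u_{α,j}) = e_α`. -/
def phi : Btil R d →ₗ[R] Bf R d :=
  Finsupp.lift (Bf R d) R ((Fin d → ℕ) × ℤ) fun p => Finsupp.single p.1 1

/-- The graded piece `B̃_g^{(m)}`, spanned over `R` by the `u_{α,|α|-m}`. -/
def gradedPiece (m : ℤ) : Submodule R (Btil R d) :=
  Submodule.span R
    {x : Btil R d | ∃ α : Fin d → ℕ, x = Finsupp.single (α, ((∑ i, α i : ℕ) : ℤ) - m) (1 : R)}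

/-!
The map `φ` turns `y_i` into `∂_{t_i}` and `∂_{y_i}` into `-t_i`, hence the Euler operator
`θ = Σᵢ y_i ∂_{y_i}` of `B̃_g` into the operator `s` of `B_f`. On the other hand `θ - s` multiplies
`u_{α,j}` by `|α| - j`, because the terms containing the `fᵢ` cancel, so it is multiplication by `m`
on `B̃_g^{(m)}`.
-/

section EulerOperator

variable (R : Type*) [CommRing R] (d : ℕ) (f : Fin d → R)

/-- Multiplication by `y_i` on `B̃_g`: `h u_{α,j} ↦ h u_{α+eᵢ,j}`. -/
def yOp (i : Fin d) : Btil R d →ₗ[R] Btil R d :=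
  Finsupp.lift (Btil R d) R ((Fin d → ℕ) × ℤ) fun p => single (p.1 + Pi.single i 1, p.2) 1

/-- The operator `∂_{y_i}` on `B̃_g`: `h u_{α,j} ↦ αᵢ h u_{α-eᵢ,j} - fᵢ h u_{α,j+1}`, the second
term being the chain rule for `δ_g`, as `∂g/∂y_i = fᵢ`. If `αᵢ = 0`, the truncated subtraction in
`α - eᵢ` is harmless because its coefficient vanishes. -/
def dyOp (i : Fin d) : Btil R d →ₗ[R] Btil R d :=
  Finsupp.lift (Btil R d) R ((Fin d → ℕ) × ℤ) fun p =>
    p.1 i • single (p.1 - Pi.single i 1, p.2) (1 : R) - f i • single (p.1, p.2 + 1) (1 : R)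

/-- The Euler operator `θ = Σᵢ y_i ∘ ∂_{y_i}` on `B̃_g`, which serves to compare the two operators
`s`. -/
def eulerOp : Btil R d →ₗ[R] Btil R d := ∑ i : Fin d, (yOp R d i).comp (dyOp R d f i)

variable {R d}

lemma yOp_single (i : Fin d) (α : Fin d → ℕ) (j : ℤ) :
    yOp R d i (single (α, j) 1) = single (α + Pi.single i 1, j) 1 := by
  simp [yOp]

lemma dyOp_single (i : Fin d) (α : Fin d → ℕ) (j : ℤ) :
    dyOp R d f i (single (α, j) 1) =
      α i • single (α - Pi.single i 1, j) (1 : R) - f i • single (α, j + 1) (1 : R) := by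
  simp only [dyOp, lift_apply, zero_smul, sum_single_index, one_smul]

lemma dz_single (k : ℤ) (α : Fin d → ℕ) (j : ℤ) :
    dz R d k (single (α, j) 1) = single (α, j + k) 1 := by
  simp [dz]

lemma zOp_single (α : Fin d → ℕ) (j : ℤ) :
    zOp R d f (single (α, j) 1) =
      (∑ i, f i • single (α + Pi.single i 1, j) (1 : R)) - j • single (α, j - 1) (1 : R) := by
  simp only [zOp, lift_apply, zero_smul, sum_single_index, one_smul]

lemma dtOp_single (i : Fin d) (β : Fin d → ℕ) :
    dtOp R d i (single β 1) = single (β + Pi.single i 1) 1 := by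
  simp [dtOp]

lemma tOp_single (i : Fin d) (β : Fin d → ℕ) :
    tOp R d f i (single β 1) =
      f i • single β (1 : R) - β i • single (β - Pi.single i 1) (1 : R) := by
  simp only [tOp, lift_apply, zero_smul, sum_single_index, one_smul]

lemma phi_single (α : Fin d → ℕ) (j : ℤ) : phi R d (single (α, j) 1) = single α 1 := by
  simp [phi]

lemma phi_comp_yOp (i : Fin d) : (phi R d).comp (yOp R d i) = (dtOp R d i).comp (phi R d) := by
  ext1 ⟨α, j⟩
  ext1
  simp only [LinearMap.comp_apply, lsingle_apply, yOp_single, phi_single, dtOp_single]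

lemma phi_comp_dyOp (i : Fin d) :
    (phi R d).comp (dyOp R d f i) = -(tOp R d f i).comp (phi R d) := by
  ext1 ⟨α, j⟩
  ext1
  simp only [LinearMap.comp_apply, LinearMap.neg_apply, lsingle_apply, dyOp_single, phi_single,
    tOp_single, map_sub, map_smul, map_nsmul, neg_sub]

lemma phi_eulerOp (x : Btil R d) : phi R d (eulerOp R d f x) = sF R d f (phi R d x) := by
  have phi_yOp (i : Fin d) (y : Btil R d) : phi R d (yOp R d i y) = dtOp R d i (phi R d y) :=
    LinearMap.congr_fun (phi_comp_yOp i) y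
  have phi_dyOp (i : Fin d) : phi R d (dyOp R d f i x) = -tOp R d f i (phi R d x) :=
    LinearMap.congr_fun (phi_comp_dyOp f i) x
  simp only [eulerOp, sF, LinearMap.sum_apply, LinearMap.neg_apply, LinearMap.comp_apply, map_sum,
    phi_yOp, phi_dyOp, map_neg, Finset.sum_neg_distrib]

lemma sTil_single (α : Fin d → ℕ) (j : ℤ) :
    sTil R d f (single (α, j) 1) =
      j • single (α, j) (1 : R) - ∑ i, f i • single (α + Pi.single i 1, j + 1) (1 : R) := by
  simp only [sTil, LinearMap.neg_apply, LinearMap.comp_apply, zOp_single, map_sub, map_sum,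
    map_smul, map_zsmul, dz_single, sub_add_cancel, neg_sub]

lemma yOp_dyOp_single (i : Fin d) (α : Fin d → ℕ) (j : ℤ) :
    yOp R d i (dyOp R d f i (single (α, j) 1)) =
      α i • single (α, j) (1 : R) - f i • single (α + Pi.single i 1, j + 1) (1 : R) := by
  rw [dyOp_single, map_sub, map_nsmul, map_smul, yOp_single, yOp_single]
  rcases Nat.eq_zero_or_pos (α i) with hα | hα
  · simp only [hα, zero_smul]
  · have single_le : Pi.single i 1 ≤ α := update_le_iff.2 ⟨hα, fun _ _ => Nat.zero_le _⟩
    rw [tsub_add_cancel_of_le single_le]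

lemma eulerOp_single (α : Fin d → ℕ) (j : ℤ) :
    eulerOp R d f (single (α, j) 1) =
      (∑ i, α i) • single (α, j) (1 : R) -
        ∑ i, f i • single (α + Pi.single i 1, j + 1) (1 : R) := by
  simp only [eulerOp, LinearMap.sum_apply, LinearMap.comp_apply, yOp_dyOp_single,
    Finset.sum_sub_distrib, Finset.sum_smul]

lemma eulerOp_sub_sTil_single (α : Fin d → ℕ) (j : ℤ) :
    (eulerOp R d f - sTil R d f) (single (α, j) 1) =
      (((∑ i, α i : ℕ) : ℤ) - j) • single (α, j) (1 : R) := by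
  rw [LinearMap.sub_apply, eulerOp_single, sTil_single, sub_sub_sub_cancel_right, sub_smul,
    natCast_zsmul]

variable {m : ℤ} {x : Btil R d}

lemma eulerOp_sub_sTil_of_mem_gradedPiece (hx : x ∈ gradedPiece R d m) :
    (eulerOp R d f - sTil R d f) x = m • x := by
  refine LinearMap.eqOn_span (g := m • LinearMap.id) ?_ hx
  rintro _ ⟨α, rfl⟩
  rw [eulerOp_sub_sTil_single, sub_sub_cancel, LinearMap.smul_apply, LinearMap.id_apply]

theorem phi_s_general (hx : x ∈ gradedPiece R d m) :
    phi R d (sTil R d f x) = sF R d f (phi R d x) - m • phi R d x := by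
  have sTil_eq : sTil R d f x = eulerOp R d f x - m • x := by
    rw [← eulerOp_sub_sTil_of_mem_gradedPiece f hx, LinearMap.sub_apply, sub_sub_cancel]
  rw [sTil_eq, map_sub, map_zsmul, phi_eulerOp]

end EulerOperator

/-- Proposition 3.3 v): for every `m ∈ ℤ` and `u ∈ B̃_g^{(m)}`,
`φ(s u) = s(φ(u)) - m • φ(u)`. -/
theorem phi_s (m : ℤ) (x : Btil R d) (hx : x ∈ gradedPiece R d m) :
    phi R d (sTil R d f x) = sF R d f (phi R d x) - m • phi R d x :=
  phi_s_general f hx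

end
end
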